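/- Let (γ,d) be a JDM instance with two regular classes and let H, H' ∈ G(γ,d). Then there exists a sequence of graphs H = G_0, G_1, …, G_t = H' with t ≤ (3/2)·|E(H) △ E(H')|, such that every G_i belongs to G(γ,d) and each G_{i+1} is obtained from G_i by a single switch. -/

import Mathlib

/-!
Because a switch must keep the number of cut edges, the useful switches are those in which two
vertices `u`, `v` of the same class exchange a neighbour `b` of one for a neighbour `x` of the
other (`Move`). Since `u` and `v` have equal degrees, any `b` adjacent to exactly one of them can be
completed to such an exchange (`exists_swappable`). Moves are reversible, so it suffices to bring
`H` and `H'` together by moves applied to either of them, and to show that at most three moves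
shrink `D = E(H) ∆ E(H')` by at least 2 (`reducible_of_ne`). Toggling a set of four pairs in `H` or
in `H'` toggles the same four pairs in `D`.

* If a vertex `b` has a pair `bu` in `H` only and a pair `bv` in `H'` only, with `u`, `v` in the same
  class, then one move is enough: exchange `b` with a `y` such that `uy` or `vy` also lies in `D`. If
  there were no such `y` for `H`, the neighbours of `v` that are not neighbours of `u` would be
  strictly fewer in `H` than in `H'`; if there were none for `H'` either, they would also be strictly
  more (`exists_good`, `reduce_one`).
* Otherwise, at each vertex the pairs of `D` of one kind are all internal and those of the other
  kind are all cut pairs. As `H` and `H'` have equally many cut edges, `V1` contains vertices `a`,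
  `a'` with opposite patterns, hence internal pairs `ac`, `a'c'` of `D` of opposite kinds, while
  `aa'` is not in `D`. A preliminary exchange, costing at most 2, creates one configuration of the
  first sort, and two independent ones if the cost is 2 (`reduce_three`). All conditions are
  formulated so as to be invariant under complementing both graphs, which treats the cases
  `aa' ∈ H` and `aa' ∉ H` alike.
-/


open SimpleGraph
open scoped symmDiff

/-- The degree of vertex `v` in graph `G`. -/
noncomputable def deg {n : ℕ} (G : SimpleGraph (Fin n)) (v : Fin n) : ℕ :=
  (G.neighborSet v).ncard

/-- The number of cut edges of `G`: edges with one endpoint in the class `V₁`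
and one endpoint in the class `V₂ = V₁ᶜ`. -/
noncomputable def cutCount {n : ℕ} (V1 : Finset (Fin n)) (G : SimpleGraph (Fin n)) : ℕ :=
  {e ∈ G.edgeSet | ∃ u v : Fin n, e = s(u, v) ∧ u ∈ V1 ∧ v ∉ V1}.ncard

/-- The number of internal edges of `G` inside `V₁`. -/
noncomputable def intCount1 {n : ℕ} (V1 : Finset (Fin n)) (G : SimpleGraph (Fin n)) : ℕ :=
  {e ∈ G.edgeSet | ∃ u v : Fin n, e = s(u, v) ∧ u ∈ V1 ∧ v ∈ V1}.ncard

/-- The number of internal edges of `G` inside `V₂ = V₁ᶜ`. -/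
noncomputable def intCount2 {n : ℕ} (V1 : Finset (Fin n)) (G : SimpleGraph (Fin n)) : ℕ :=
  {e ∈ G.edgeSet | ∃ u v : Fin n, e = s(u, v) ∧ u ∉ V1 ∧ v ∉ V1}.ncard

/-- `G ∈ 𝒢(γ,d)`: vertex `i` has degree `d i` for every `i`, and `G` has
exactly `γ` cut edges. -/
def memPAM {n : ℕ} (V1 : Finset (Fin n)) (γ : ℕ) (d : Fin n → ℕ)
    (G : SimpleGraph (Fin n)) : Prop :=
  (∀ v, deg G v = d v) ∧ cutCount V1 G = γ

/-- `G ∈ 𝒢'(γ,d)`: the degree sequence `d'` of `G` and its number `γ'` of cut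
edges satisfy `Σ d'ᵢ = Σ dᵢ`, `Σ |dᵢ − d'ᵢ| ≤ 4`, and `|γ' − γ| ≤ 1`. -/
def memPAM' {n : ℕ} (V1 : Finset (Fin n)) (γ : ℕ) (d : Fin n → ℕ)
    (G : SimpleGraph (Fin n)) : Prop :=
  (∑ v, deg G v = ∑ v, d v) ∧
  (∑ v, |(d v : ℤ) - (deg G v : ℤ)| ≤ 4) ∧
  |(cutCount V1 G : ℤ) - (γ : ℤ)| ≤ 1

/-- A hinge flip: replace an edge `{i,j}` of `G` by a non-edge `{j,k}`. -/
def hingeFlip {n : ℕ} (G H : SimpleGraph (Fin n)) : Prop :=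
  ∃ i j k : Fin n, G.Adj i j ∧ j ≠ k ∧ ¬ G.Adj j k ∧
    H = (G.deleteEdges {s(i, j)}) ⊔ fromEdgeSet {s(j, k)}

/-- A switch: replace two disjoint edges `{a,b}`, `{x,y}` of `G` by a perfect
matching on `{a,b,x,y}` none of whose edges is in `G` (both alternative
matchings are covered by the choice of the labels `x`, `y`). -/
def switchMove {n : ℕ} (G H : SimpleGraph (Fin n)) : Prop :=
  ∃ a b x y : Fin n, a ≠ b ∧ a ≠ x ∧ a ≠ y ∧ b ≠ x ∧ b ≠ y ∧ x ≠ y ∧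
    G.Adj a b ∧ G.Adj x y ∧ ¬ G.Adj a x ∧ ¬ G.Adj b y ∧
    H = (G.deleteEdges {s(a, b), s(x, y)}) ⊔ fromEdgeSet {s(a, x), s(b, y)}

/-- The four edges toggled when `u` and `v` exchange their neighbours `b` and `x`. -/
def quad {n : ℕ} (u v b x : Fin n) : Set (Sym2 (Fin n)) :=
  {s(u, b), s(u, x), s(v, b), s(v, x)}

/-- The graph `G` with the four edges of `quad u v b x` toggled. -/
def tog {n : ℕ} (G : SimpleGraph (Fin n)) (u v b x : Fin n) : SimpleGraph (Fin n) :=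
  fromEdgeSet (G.edgeSet ∆ quad u v b x)

/-- In `G`, the distinct vertices `u`, `v` can exchange `b` and `x`: one of `b`, `x` is a neighbour
of `u` only, the other one of `v` only. The condition is invariant under complementation of `G`
and under `tog`. -/
structure Swappable {n : ℕ} (G : SimpleGraph (Fin n)) (u v b x : Fin n) : Prop where
  uv : u ≠ v
  ub : u ≠ b
  ux : u ≠ x
  vb : v ≠ b
  vx : v ≠ x
  bx : b ≠ x
  hb : ¬ (G.Adj u b ↔ G.Adj v b)
  hx : ¬ (G.Adj u x ↔ G.Adj v x)
  hu : ¬ (G.Adj u b ↔ G.Adj u x)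

/-- A switch in which two vertices of the same class exchange neighbours; these are the switches
that preserve the number of cut edges. -/
def Move {n : ℕ} (V1 : Finset (Fin n)) (G K : SimpleGraph (Fin n)) : Prop :=
  ∃ u v b x : Fin n, (u ∈ V1 ↔ v ∈ V1) ∧ Swappable G u v b x ∧ K = tog G u v b x

/-- `MovePath V1 t G K`: the graph `K` arises from `G` by `t` consecutive moves. -/
inductive MovePath {n : ℕ} (V1 : Finset (Fin n)) :
    ℕ → SimpleGraph (Fin n) → SimpleGraph (Fin n) → Prop
  | nil (G) : MovePath V1 0 G G
  | cons {t G K L} : Move V1 G K → MovePath V1 t K L → MovePath V1 (t + 1) G L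

/-- The pair `(H, H')` can be moved to `(K, K')` with at most `k` moves in total. -/
def PairReach {n : ℕ} (V1 : Finset (Fin n)) (k : ℕ) (H H' K K' : SimpleGraph (Fin n)) : Prop :=
  ∃ i j, i + j ≤ k ∧ MovePath V1 i H K ∧ MovePath V1 j K' H'

/-- Vertices of the same class have the same degree. -/
def ClassRegular {n : ℕ} (V1 : Finset (Fin n)) (G : SimpleGraph (Fin n)) : Prop :=
  ∀ u v, (u ∈ V1 ↔ v ∈ V1) → deg G u = deg G v

variable {n : ℕ} {V1 : Finset (Fin n)}

/-! ### Toggling -/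

lemma mem_quad {u v b x p q : Fin n} : s(p, q) ∈ quad u v b x ↔
    s(p, q) = s(u, b) ∨ s(p, q) = s(u, x) ∨ s(p, q) = s(v, b) ∨ s(p, q) = s(v, x) := Iff.rfl

lemma tog_adj {G : SimpleGraph (Fin n)} {u v b x : Fin n} (h : Swappable G u v b x)
    (p q : Fin n) : (tog G u v b x).Adj p q ↔ ¬ (G.Adj p q ↔ s(p, q) ∈ quad u v b x) := by
  have h1 := h.ub
  have h2 := h.ux
  have h3 := h.vb
  have h4 := h.vx
  have key : s(p, q) ∈ quad u v b x → p ≠ q := by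
    rintro hq rfl
    simp only [mem_quad, Sym2.eq_iff] at hq
    grind
  have key2 : G.Adj p q → p ≠ q := fun h => h.ne
  simp only [tog, fromEdgeSet_adj, Set.mem_symmDiff, mem_edgeSet]
  tauto

lemma edgeSet_tog {G : SimpleGraph (Fin n)} {u v b x : Fin n} (h : Swappable G u v b x) :
    (tog G u v b x).edgeSet = G.edgeSet ∆ quad u v b x := by
  ext e
  induction e with | _ p q
  rw [mem_edgeSet, tog_adj h, Set.mem_symmDiff, mem_edgeSet]
  tauto

lemma Swappable.toggled {G : SimpleGraph (Fin n)} {u v b x : Fin n} (h : Swappable G u v b x) :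
    Swappable (tog G u v b x) u v b x := by
  refine ⟨h.uv, h.ub, h.ux, h.vb, h.vx, h.bx, ?_, ?_, ?_⟩
  · have := h.hb
    simp only [tog_adj h, mem_quad]
    tauto
  · have := h.hx
    simp only [tog_adj h, mem_quad]
    tauto
  · have := h.hu
    simp only [tog_adj h, mem_quad]
    tauto

lemma Move.symm {G K : SimpleGraph (Fin n)} (h : Move V1 G K) : Move V1 K G := by
  obtain ⟨u, v, b, x, hc, hs, rfl⟩ := h
  refine ⟨u, v, b, x, hc, hs.toggled, ?_⟩
  rw [← edgeSet_inj, edgeSet_tog hs.toggled, edgeSet_tog hs, symmDiff_symmDiff_cancel_right]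

lemma Swappable.flip {G : SimpleGraph (Fin n)} {u v b x : Fin n} (h : Swappable G u v b x) :
    Swappable G u v x b :=
  ⟨h.uv, h.ux, h.ub, h.vx, h.vb, h.bx.symm, h.hx, h.hb, fun k => h.hu k.symm⟩

lemma tog_flip (G : SimpleGraph (Fin n)) (u v b x : Fin n) : tog G u v b x = tog G u v x b := by
  have : quad u v b x = quad u v x b := by
    ext e
    simp only [quad, Set.mem_insert_iff, Set.mem_singleton_iff]
    tauto
  rw [tog, tog, this]

lemma mem_symmDiff_four {α : Type*} {A : Set α} {a b c d : α} (ha : a ∈ A) (hb : b ∉ A)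
    (hc : c ∉ A) (hd : d ∈ A) (e : α) :
    e ∈ A ∆ {a, b, c, d} ↔ (e ∈ A ∧ e ∉ ({a, d} : Set α)) ∨ e ∈ ({b, c} : Set α) := by
  simp only [Set.mem_symmDiff, Set.mem_insert_iff, Set.mem_singleton_iff]
  grind

lemma switchMove_tog {G : SimpleGraph (Fin n)} {u v b x : Fin n} (hs : Swappable G u v b x)
    (hub : G.Adj u b) : switchMove G (tog G u v b x) := by
  obtain ⟨h1, h2, h3, h4, h5, h6, h7, h8, h9⟩ := hs
  have k1 : ¬ G.Adj v b := by tauto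
  have k2 : ¬ G.Adj u x := by tauto
  have k3 : G.Adj v x := by tauto
  refine ⟨u, b, x, v, h2, h3, h1, h6, h4.symm, h5.symm, hub, k3.symm, k2,
    fun h => k1 h.symm, ?_⟩
  ext p q
  rw [tog, fromEdgeSet_adj, quad, mem_symmDiff_four (A := G.edgeSet) hub k2 k1 k3, sup_adj,
    deleteEdges_adj, fromEdgeSet_adj, mem_edgeSet, Sym2.eq_swap (a := x) (b := v),
    Sym2.eq_swap (a := b) (b := v)]
  have := fun h : G.Adj p q => h.ne
  tauto

lemma Move.isSwitch {G K : SimpleGraph (Fin n)} (h : Move V1 G K) : switchMove G K := by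
  obtain ⟨u, v, b, x, -, hs, rfl⟩ := h
  by_cases hub : G.Adj u b
  · exact switchMove_tog hs hub
  · rw [tog_flip]
    have := hs.hu
    exact switchMove_tog hs.flip (by tauto)

/-! ### Moves preserve degrees and the number of cut edges -/

lemma ncard_symmDiff_add {α : Type*} [Finite α] (A T : Set α) :
    (A ∆ T).ncard + 2 * (A ∩ T).ncard = A.ncard + T.ncard := by
  have h1 := Set.ncard_inter_add_ncard_sdiff_eq_ncard A T
  have h2 := Set.ncard_inter_add_ncard_sdiff_eq_ncard T A
  have h3 : (A ∆ T).ncard = (A \ T).ncard + (T \ A).ncard := by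
    rw [Set.symmDiff_def, Set.ncard_union_eq disjoint_sdiff_sdiff]
  rw [Set.inter_comm] at h2
  omega

lemma ncard_symmDiff_pair {α : Type*} [Finite α] (A : Set α) {a b : α} (hab : a ≠ b)
    (h : ¬ (a ∈ A ↔ b ∈ A)) : (A ∆ {a, b}).ncard = A.ncard := by
  have h1 := ncard_symmDiff_add A {a, b}
  have h2 : (A ∩ {a, b}).ncard = 1 := by
    rw [Set.ncard_eq_one]
    by_cases ha : a ∈ A
    · refine ⟨a, ?_⟩
      ext c
      simp only [Set.mem_inter_iff, Set.mem_insert_iff, Set.mem_singleton_iff]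
      grind
    · refine ⟨b, ?_⟩
      ext c
      simp only [Set.mem_inter_iff, Set.mem_insert_iff, Set.mem_singleton_iff]
      grind
  rw [Set.ncard_pair hab] at h1
  omega

lemma deg_tog {G : SimpleGraph (Fin n)} {u v b x : Fin n} (h : Swappable G u v b x) (w : Fin n) :
    deg (tog G u v b x) w = deg G w := by
  have h0 := h
  obtain ⟨h1, h2, h3, h4, h5, h6, h7, h8, h9⟩ := h0
  have c1 := G.adj_comm u b
  have c2 := G.adj_comm u x
  have c3 := G.adj_comm v b
  have c4 := G.adj_comm v x
  unfold deg
  by_cases hw : w = u ∨ w = v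
  · have : (tog G u v b x).neighborSet w = G.neighborSet w ∆ {b, x} := by
      ext z
      simp only [mem_neighborSet, tog_adj h, mem_quad, Set.mem_symmDiff, Set.mem_insert_iff,
        Set.mem_singleton_iff, Sym2.eq_iff]
      grind
    rw [this, ncard_symmDiff_pair _ h6]
    simp only [mem_neighborSet]
    grind
  · by_cases hw' : w = b ∨ w = x
    · have : (tog G u v b x).neighborSet w = G.neighborSet w ∆ {u, v} := by
        ext z
        simp only [mem_neighborSet, tog_adj h, mem_quad, Set.mem_symmDiff, Set.mem_insert_iff,
          Set.mem_singleton_iff, Sym2.eq_iff]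
        grind
      rw [this, ncard_symmDiff_pair _ h1]
      simp only [mem_neighborSet]
      grind
    · congr 1
      ext z
      simp only [mem_neighborSet, tog_adj h, mem_quad, Sym2.eq_iff]
      grind

/-- The pairs of vertices with one member in each class. -/
def cutPairs (V1 : Finset (Fin n)) : Set (Sym2 (Fin n)) :=
  {e | ∃ u v : Fin n, e = s(u, v) ∧ u ∈ V1 ∧ v ∉ V1}

lemma mem_cutPairs {p q : Fin n} : s(p, q) ∈ cutPairs V1 ↔ ¬ (p ∈ V1 ↔ q ∈ V1) := by
  simp only [cutPairs, Set.mem_ofPred_eq, Sym2.eq_iff]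
  constructor
  · grind
  · intro h
    by_cases hp : p ∈ V1
    · exact ⟨p, q, by grind⟩
    · exact ⟨q, p, by grind⟩

lemma cutCount_eq (G : SimpleGraph (Fin n)) :
    cutCount V1 G = (G.edgeSet ∩ cutPairs V1).ncard := rfl

/-- Toggling two elements, one of them present, that both lie in `C` or both outside `C`. -/
lemma ncard_symmDiff_pair_inter {α : Type*} [Finite α] (A C : Set α) {a b : α} (hab : a ≠ b)
    (h : ¬ (a ∈ A ↔ b ∈ A)) (hC : a ∈ C ↔ b ∈ C) :
    ((A ∆ {a, b}) ∩ C).ncard = (A ∩ C).ncard := by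
  by_cases ha : a ∈ C
  · have hb := hC.1 ha
    rw [← ncard_symmDiff_pair (A ∩ C) hab (by simpa [ha, hb] using h)]
    congr 1
    ext e
    simp only [Set.mem_inter_iff, Set.mem_symmDiff, Set.mem_insert_iff, Set.mem_singleton_iff]
    grind
  · have hb := fun k => ha (hC.2 k)
    congr 1
    ext e
    simp only [Set.mem_inter_iff, Set.mem_symmDiff, Set.mem_insert_iff, Set.mem_singleton_iff]
    grind

lemma symmDiff_four {α : Type*} (A : Set α) {a b c d : α} (hab : a ≠ b) (had : a ≠ d)
    (hcb : c ≠ b) (hcd : c ≠ d) : A ∆ {a, b, c, d} = (A ∆ {a, c}) ∆ {b, d} := by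
  rw [symmDiff_assoc]
  congr 1
  ext e
  simp only [Set.mem_symmDiff, Set.mem_insert_iff, Set.mem_singleton_iff]
  grind

lemma cutCount_tog {G : SimpleGraph (Fin n)} {u v b x : Fin n} (hc : u ∈ V1 ↔ v ∈ V1)
    (h : Swappable G u v b x) : cutCount V1 (tog G u v b x) = cutCount V1 G := by
  obtain ⟨h1, h2, h3, h4, h5, h6, h7, h8, -⟩ := id h
  have e1 : s(u, b) ≠ s(v, b) := by rw [Ne, Sym2.eq_iff]; tauto
  have e2 : s(u, x) ≠ s(v, x) := by rw [Ne, Sym2.eq_iff]; tauto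
  have e3 : s(u, b) ≠ s(u, x) := by rw [Ne, Sym2.eq_iff]; tauto
  have e4 : s(u, b) ≠ s(v, x) := by rw [Ne, Sym2.eq_iff]; tauto
  have e5 : s(v, b) ≠ s(u, x) := by rw [Ne, Sym2.eq_iff]; grind
  have e6 : s(v, b) ≠ s(v, x) := by rw [Ne, Sym2.eq_iff]; tauto
  rw [cutCount_eq, cutCount_eq, edgeSet_tog h, quad, symmDiff_four _ e3 e4 e5 e6,
    ncard_symmDiff_pair_inter _ _ e2, ncard_symmDiff_pair_inter _ _ e1 h7]
  · rw [mem_cutPairs, mem_cutPairs, hc]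
  · simpa [Set.mem_symmDiff, -Sym2.eq, e3.symm, e5.symm, e4.symm, e6.symm] using h8
  · rw [mem_cutPairs, mem_cutPairs, hc]

lemma Move.mem_of_mem {γ : ℕ} {d : Fin n → ℕ} {G K : SimpleGraph (Fin n)} (h : Move V1 G K)
    (hG : memPAM V1 γ d G) : memPAM V1 γ d K := by
  obtain ⟨u, v, b, x, hc, hs, rfl⟩ := h
  exact ⟨fun w => by rw [deg_tog hs, hG.1], by rw [cutCount_tog hc hs, hG.2]⟩

lemma Move.classRegular {G K : SimpleGraph (Fin n)} (h : Move V1 G K)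
    (hG : ClassRegular V1 G) : ClassRegular V1 K := by
  obtain ⟨u, v, b, x, hc, hs, rfl⟩ := h
  intro p q hpq
  rw [deg_tog hs, deg_tog hs, hG p q hpq]

/-! ### Paths of moves -/

lemma MovePath.single {G K : SimpleGraph (Fin n)} (h : Move V1 G K) : MovePath V1 1 G K :=
  .cons h (.nil K)

lemma MovePath.trans {s t : ℕ} {G K L : SimpleGraph (Fin n)} (h : MovePath V1 s G K)
    (h' : MovePath V1 t K L) : MovePath V1 (s + t) G L := by
  induction h with
  | nil => simpa using h'
  | cons hm _ ih =>
    rw [Nat.add_right_comm]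
    exact .cons hm (ih h')

lemma MovePath.mem_iff {γ : ℕ} {d : Fin n → ℕ} {t : ℕ} {G K : SimpleGraph (Fin n)}
    (h : MovePath V1 t G K) : memPAM V1 γ d G ↔ memPAM V1 γ d K := by
  induction h with
  | nil => rfl
  | cons hm _ ih => rw [← ih]; exact ⟨hm.mem_of_mem, hm.symm.mem_of_mem⟩

lemma MovePath.exists_fun {t : ℕ} {G K : SimpleGraph (Fin n)} (h : MovePath V1 t G K) :
    ∃ f : ℕ → SimpleGraph (Fin n), f 0 = G ∧ f t = K ∧ ∀ i < t, Move V1 (f i) (f (i + 1)) := by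
  induction h with
  | nil G => exact ⟨fun _ => G, rfl, rfl, by simp⟩
  | @cons t G K L hm _ ih =>
    obtain ⟨f, h0, ht, hf⟩ := ih
    refine ⟨fun i => Nat.casesOn i G f, rfl, ht, ?_⟩
    rintro (_ | i) hi
    · simpa [h0] using hm
    · exact hf i (by omega)

lemma PairReach.trans {k l : ℕ} {H H' K K' L L' : SimpleGraph (Fin n)}
    (h : PairReach V1 k H H' K K') (h' : PairReach V1 l K K' L L') :
    PairReach V1 (k + l) H H' L L' := by
  obtain ⟨i, j, hij, p, q⟩ := h
  obtain ⟨i', j', hij', p', q'⟩ := h'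
  exact ⟨i + i', j' + j, by omega, p.trans p', q'.trans q⟩

lemma PairReach.mono {k l : ℕ} {H H' K K' : SimpleGraph (Fin n)}
    (h : PairReach V1 k H H' K K') (hkl : k ≤ l) : PairReach V1 l H H' K K' := by
  obtain ⟨i, j, hij, p, q⟩ := h
  exact ⟨i, j, by omega, p, q⟩

/-! ### Reducing the symmetric difference -/

/-- `ab` is an edge of exactly one of the two graphs. -/
def Dif (H H' : SimpleGraph (Fin n)) (a b : Fin n) : Prop := ¬ (H.Adj a b ↔ H'.Adj a b)

lemma mem_symmDiff_edgeSet {H H' : SimpleGraph (Fin n)} {a b : Fin n} :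
    s(a, b) ∈ H.edgeSet ∆ H'.edgeSet ↔ Dif H H' a b := by
  rw [Set.mem_symmDiff, mem_edgeSet, mem_edgeSet, Dif]
  tauto

lemma Dif.symm {H H' : SimpleGraph (Fin n)} {a b : Fin n} (h : Dif H H' a b) : Dif H H' b a := by
  rwa [Dif, H.adj_comm, H'.adj_comm]

/-- The neighbours of `u`, other than `v`, that are not neighbours of `v`. -/
def priv (G : SimpleGraph (Fin n)) (u v : Fin n) : Set (Fin n) :=
  {x | G.Adj u x ∧ ¬ G.Adj v x ∧ x ≠ v}

lemma ncard_priv {G : SimpleGraph (Fin n)} {u v : Fin n} (h : deg G u = deg G v) :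
    (priv G u v).ncard = (priv G v u).ncard := by
  have h1 := Set.ncard_inter_add_ncard_sdiff_eq_ncard (G.neighborSet u) (G.neighborSet v)
  have h2 := Set.ncard_inter_add_ncard_sdiff_eq_ncard (G.neighborSet v) (G.neighborSet u)
  rw [Set.inter_comm] at h2
  unfold deg at h
  by_cases hA : G.Adj u v
  · have e : ∀ {a b : Fin n}, G.Adj a b →
        (G.neighborSet a \ G.neighborSet b).ncard = (priv G a b).ncard + 1 := by
      intro a b hab
      have : G.neighborSet a \ G.neighborSet b = insert b (priv G a b) := by
        ext z
        have := G.loopless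
        simp only [Set.mem_sdiff, mem_neighborSet, Set.mem_insert_iff, priv, Set.mem_ofPred_eq]
        by_cases hz : z = b
        · subst hz; simp [hab]
        · simp [hz]
      rw [this, Set.ncard_insert_of_notMem (by simp [priv])]
    have := e hA
    have := e hA.symm
    omega
  · have e : ∀ {a b : Fin n}, ¬ G.Adj a b →
        G.neighborSet a \ G.neighborSet b = priv G a b := by
      intro a b hab
      ext z
      simp only [Set.mem_sdiff, mem_neighborSet, priv, Set.mem_ofPred_eq]
      grind
    rw [e hA] at h1
    rw [e (fun h => hA h.symm)] at h2
    omega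

/-- Equality of degrees lets a hinge flip between `u` and `v` be completed to a switch. -/
lemma exists_swappable {G : SimpleGraph (Fin n)} {u v b : Fin n} (h : deg G u = deg G v)
    (hub : u ≠ b) (hvb : v ≠ b) (hb : ¬ (G.Adj u b ↔ G.Adj v b)) :
    ∃ x, Swappable G u v b x := by
  have key : ∀ {a c : Fin n}, deg G a = deg G c → c ≠ b → G.Adj a b → ¬ G.Adj c b →
      ∃ x, x ∈ priv G c a := by
    intro a c hac hcb hab hcb'
    have h1 : 0 < (priv G a c).ncard := (Set.ncard_pos (Set.toFinite _)).2 ⟨b, hab, hcb', hcb.symm⟩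
    rw [ncard_priv hac] at h1
    exact (Set.ncard_pos (Set.toFinite _)).1 h1
  have huv : u ≠ v := by rintro rfl; exact hb Iff.rfl
  by_cases hA : G.Adj u b
  · obtain ⟨x, hx1, hx2, hx3⟩ := key h hvb hA (by tauto)
    refine ⟨x, huv, hub, hx3.symm, hvb, hx1.ne, ?_, hb, by tauto, by tauto⟩
    rintro rfl
    exact hx2 hA
  · obtain ⟨x, hx1, hx2, hx3⟩ := key h.symm hub (by tauto) hA
    refine ⟨x, huv, hub, hx1.ne, hvb, hx3.symm, ?_, hb, by tauto, by tauto⟩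
    rintro rfl
    exact hA hx1

/-- If `bu` and `bv` are differing pairs of opposite kinds, some exchange of `b` and `y` between
`u` and `v` toggles a third differing pair. Were this false in both graphs, comparing the private
neighbourhoods of `u` and `v` would make their size both larger and smaller in `H` than in `H'`. -/
lemma exists_good {H H' : SimpleGraph (Fin n)} {u v b : Fin n} (h : deg H u = deg H v)
    (h' : deg H' u = deg H' v) (hu : Dif H H' u b) (hv : Dif H H' v b)
    (huv : ¬ (H.Adj u b ↔ H.Adj v b)) :
    ∃ y, (Dif H H' u y ∨ Dif H H' v y) ∧ (Swappable H u v b y ∨ Swappable H' u v b y) := by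
  -- the orientation in which `ub` is an edge of `H`
  have key : ∀ {u v : Fin n}, deg H u = deg H v → deg H' u = deg H' v → H.Adj u b →
      ¬ H.Adj v b → ¬ H'.Adj u b → H'.Adj v b →
      ∃ y, (Dif H H' u y ∨ Dif H H' v y) ∧ (Swappable H u v b y ∨ Swappable H' u v b y) := by
    clear hu hv huv h h' u v
    intro u v h h' h1 h2 h3 h4
    by_contra! hcon
    have huv : u ≠ v := by rintro rfl; exact h2 h1
    have s1 : priv H v u ⊂ priv H' v u := by
      refine Set.ssubset_iff_of_subset ?_ |>.2 ⟨b, ⟨h4, h3, h1.ne'⟩, fun hb => h2 hb.1⟩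
      rintro y ⟨y1, y2, y3⟩
      by_contra hy
      have hS : Swappable H u v b y :=
        ⟨huv, h1.ne, y3.symm, h4.ne, y1.ne, by rintro rfl; exact y2 h1, by tauto, by tauto,
          by tauto⟩
      refine (hcon y ?_).1 hS
      simp only [priv, Set.mem_ofPred_eq, Dif] at hy ⊢
      tauto
    have s2 : priv H' u v ⊂ priv H u v := by
      refine Set.ssubset_iff_of_subset ?_ |>.2 ⟨b, ⟨h1, h2, h4.ne'⟩, fun hb => h3 hb.1⟩
      rintro y ⟨y1, y2, y3⟩
      by_contra hy
      have hS : Swappable H' u v b y :=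
        ⟨huv, h1.ne, y1.ne, h4.ne, y3.symm, by rintro rfl; exact y2 h4, by tauto, by tauto,
          by tauto⟩
      refine (hcon y ?_).2 hS
      simp only [priv, Set.mem_ofPred_eq, Dif] at hy ⊢
      tauto
    have t1 := Set.ncard_lt_ncard s1
    have t2 := Set.ncard_lt_ncard s2
    rw [ncard_priv h, ncard_priv h'] at t2
    omega
  by_cases hA : H.Adj u b
  · exact key h h' hA (by tauto) (by unfold Dif at *; tauto) (by unfold Dif at *; tauto)
  · obtain ⟨y, hy, hs⟩ := key h.symm h'.symm (u := v) (v := u) (by tauto) hA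
      (by unfold Dif at *; tauto) (by unfold Dif at *; tauto)
    have flip : ∀ {G : SimpleGraph (Fin n)}, Swappable G v u b y → Swappable G u v b y :=
      fun g => ⟨g.uv.symm, g.vb, g.vx, g.ub, g.ux, g.bx, fun k => g.hb k.symm,
        fun k => g.hx k.symm, by have := g.hb; have := g.hx; have := g.hu; tauto⟩
    exact ⟨y, hy.symm, hs.imp flip flip⟩

lemma ncard_quad_le (u v b x : Fin n) : (quad u v b x).ncard ≤ 4 := by
  have a1 := Set.ncard_insert_le s(u, b) {s(u, x), s(v, b), s(v, x)}
  have a2 := Set.ncard_insert_le s(u, x) {s(v, b), s(v, x)}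
  have a3 := Set.ncard_insert_le s(v, b) {s(v, x)}
  rw [Set.ncard_singleton] at a3
  unfold quad
  omega

/-- Toggling in `H` or in `H'` has the same effect on the symmetric difference. -/
lemma symmDiff_tog {H H' : SimpleGraph (Fin n)} {u v b x : Fin n} :
    (Swappable H u v b x →
      (tog H u v b x).edgeSet ∆ H'.edgeSet = (H.edgeSet ∆ H'.edgeSet) ∆ quad u v b x) ∧
    (Swappable H' u v b x →
      H.edgeSet ∆ (tog H' u v b x).edgeSet = (H.edgeSet ∆ H'.edgeSet) ∆ quad u v b x) := by
  refine ⟨fun h => ?_, fun h => ?_⟩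
  · rw [edgeSet_tog h, symmDiff_right_comm]
  · rw [edgeSet_tog h, symmDiff_assoc]

/-- Two differing pairs of opposite kinds that share an end, with their other ends in one class,
allow a single move that shrinks the symmetric difference. Only pairs in `quad u v b y` are
affected. -/
lemma reduce_one {H H' : SimpleGraph (Fin n)} {u v b : Fin n} (hH : ClassRegular V1 H)
    (hH' : ClassRegular V1 H') (hc : u ∈ V1 ↔ v ∈ V1) (hu : Dif H H' u b) (hv : Dif H H' v b)
    (huv : ¬ (H.Adj u b ↔ H.Adj v b)) :
    ∃ y K K', PairReach V1 1 H H' K K' ∧ ClassRegular V1 K ∧ ClassRegular V1 K' ∧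
      (K.edgeSet ∆ K'.edgeSet).ncard + 2 ≤ (H.edgeSet ∆ H'.edgeSet).ncard ∧
      ∀ p q, s(p, q) ∉ quad u v b y → (K.Adj p q ↔ H.Adj p q) ∧ (K'.Adj p q ↔ H'.Adj p q) := by
  obtain ⟨y, hy, hs⟩ := exists_good (hH u v hc) (hH' u v hc) hu hv huv
  have count : ∀ {G : SimpleGraph (Fin n)}, Swappable G u v b y →
      ((H.edgeSet ∆ H'.edgeSet) ∆ quad u v b y).ncard + 2 ≤ (H.edgeSet ∆ H'.edgeSet).ncard := by
    intro G hG
    obtain ⟨h1, h2, h3, h4, h5, h6, -, -, -⟩ := hG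
    have c1 := ncard_symmDiff_add (H.edgeSet ∆ H'.edgeSet) (quad u v b y)
    have c2 := ncard_quad_le u v b y
    have e1 : s(u, b) ≠ s(v, b) := by rw [Ne, Sym2.eq_iff]; grind
    have c3 : 3 ≤ ((H.edgeSet ∆ H'.edgeSet) ∩ quad u v b y).ncard := by
      obtain ⟨z, hz, hzq, z1, z2⟩ : ∃ z, z ∈ H.edgeSet ∆ H'.edgeSet ∧ z ∈ quad u v b y ∧
          s(u, b) ≠ z ∧ s(v, b) ≠ z := by
        rcases hy with hy | hy
        · exact ⟨s(u, y), mem_symmDiff_edgeSet.2 hy, by simp [quad],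
            by rw [Ne, Sym2.eq_iff]; grind, by rw [Ne, Sym2.eq_iff]; grind⟩
        · exact ⟨s(v, y), mem_symmDiff_edgeSet.2 hy, by simp [quad],
            by rw [Ne, Sym2.eq_iff]; grind, by rw [Ne, Sym2.eq_iff]; grind⟩
      rw [← Set.ncard_eq_three.2 ⟨_, _, _, e1, z1, z2, rfl⟩]
      refine Set.ncard_le_ncard ?_
      rintro e (rfl | rfl | rfl)
      · exact ⟨mem_symmDiff_edgeSet.2 hu, by simp [quad]⟩
      · exact ⟨mem_symmDiff_edgeSet.2 hv, by simp [quad]⟩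
      · exact ⟨hz, hzq⟩
    omega
  rcases hs with hs | hs
  · have hm : Move V1 H (tog H u v b y) := ⟨u, v, b, y, hc, hs, rfl⟩
    refine ⟨y, tog H u v b y, H', ⟨1, 0, le_rfl, .single hm, .nil _⟩, hm.classRegular hH, hH',
      ?_, fun p q hpq => ⟨?_, Iff.rfl⟩⟩
    · rw [symmDiff_tog.1 hs]; exact count hs
    · rw [tog_adj hs]; tauto
  · have hm : Move V1 H' (tog H' u v b y) := ⟨u, v, b, y, hc, hs, rfl⟩
    refine ⟨y, H, tog H' u v b y, ⟨0, 1, le_rfl, .nil _, .single hm.symm⟩, hH,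
      hm.classRegular hH', ?_, fun p q hpq => ⟨Iff.rfl, ?_⟩⟩
    · rw [symmDiff_tog.2 hs]; exact count hs
    · rw [tog_adj hs]; tauto

/-- The pair `(H, H')` can be brought closer together with at most three moves. -/
def Reducible3 (V1 : Finset (Fin n)) (H H' : SimpleGraph (Fin n)) : Prop :=
  ∃ K K', PairReach V1 3 H H' K K' ∧
    (K.edgeSet ∆ K'.edgeSet).ncard + 2 ≤ (H.edgeSet ∆ H'.edgeSet).ncard

lemma reducible_of_opposite {H H' : SimpleGraph (Fin n)} {u v b : Fin n} (hH : ClassRegular V1 H)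
    (hH' : ClassRegular V1 H') (hc : u ∈ V1 ↔ v ∈ V1) (hu : Dif H H' u b) (hv : Dif H H' v b)
    (huv : ¬ (H.Adj u b ↔ H.Adj v b)) : Reducible3 V1 H H' := by
  obtain ⟨y, K, K', hr, -, -, hD, -⟩ := reduce_one hH hH' hc hu hv huv
  exact ⟨K, K', hr.mono (by norm_num), hD⟩

/-- Two differing pairs `up`, `vs` of opposite kinds inside one class, together with a
non-differing pair `vp` whose status in `H` is opposite to that of `up`. Exchanging `p` and a
suitable `x` between `u` and `v` in `H` enlarges the symmetric difference by at most 2 and makes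
`vp`, `vs` differing pairs of opposite kinds. If it does enlarge it, then `xu`, `xv` are a second
such couple, which survives the reduction performed at `v`. -/
lemma reduce_three {H H' : SimpleGraph (Fin n)} {u v p s : Fin n} (hH : ClassRegular V1 H)
    (hH' : ClassRegular V1 H') (huv : u ∈ V1 ↔ v ∈ V1) (hps : p ∈ V1 ↔ s ∈ V1)
    (hpv : p ∈ V1 ↔ v ∈ V1)
    (hup : Dif H H' u p) (hvs : Dif H H' v s) (hvp : ¬ Dif H H' v p) (hvp' : v ≠ p)
    (hop : ¬ (H.Adj u p ↔ H.Adj v s)) (hop' : ¬ (H.Adj u p ↔ H.Adj v p)) :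
    Reducible3 V1 H H' := by
  have hup' : u ≠ p := by rintro rfl; simp [Dif] at hup
  have hvs' : v ≠ s := by rintro rfl; simp [Dif] at hvs
  by_cases hus : u = s
  · subst hus
    refine reducible_of_opposite (b := u) hH hH' hpv hup.symm hvs ?_
    rw [H.adj_comm p u]; exact hop
  obtain ⟨x, hS⟩ := exists_swappable (hH u v huv) hup' hvp' hop'
  obtain ⟨s1, s2, s3, s4, s5, s6, s7, s8, s9⟩ := id hS
  have hm : Move V1 H (tog H u v p x) := ⟨u, v, p, x, huv, hS, rfl⟩
  have hr : PairReach V1 1 H H' (tog H u v p x) H' := ⟨1, 0, le_rfl, .single hm, .nil _⟩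
  have hsp : s ≠ p := by rintro rfl; exact hvp hvs
  have hsx : s ≠ x := by rintro rfl; clear * - hop s7 s8 s9; tauto
  have qvp : s(v, p) ∈ quad u v p x := by simp [quad]
  have qvs : s(v, s) ∉ quad u v p x := by
    clear * - hvs' hsp hsx hus s1 s4 s5; simp only [mem_quad, Sym2.eq_iff]; grind
  have aps : (tog H u v p x).Adj v p ↔ ¬ H.Adj v p := by
    rw [tog_adj hS]; clear * - qvp; tauto
  have avs : (tog H u v p x).Adj v s ↔ H.Adj v s := by
    rw [tog_adj hS]; clear * - qvs; tauto
  have dps : Dif (tog H u v p x) H' v p := by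
    rw [Dif, aps]; clear * - hvp; unfold Dif at hvp; tauto
  have dvs : Dif (tog H u v p x) H' v s := by rwa [Dif, avs]
  obtain ⟨y, K, K', hr2, hK, hK', hD2, hpres⟩ :=
    reduce_one (hm.classRegular hH) hH' hps dps.symm dvs.symm
      (by rw [adj_comm _ p, adj_comm _ s, aps, avs]; clear * - hop hop'; tauto)
  have c1 := ncard_symmDiff_add (H.edgeSet ∆ H'.edgeSet) (quad u v p x)
  have c2 := ncard_quad_le u v p x
  rw [← symmDiff_tog.1 hS] at c1
  have mup : s(u, p) ∈ (H.edgeSet ∆ H'.edgeSet) ∩ quad u v p x :=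
    ⟨mem_symmDiff_edgeSet.2 hup, by simp [quad]⟩
  by_cases hx : Dif H H' u x ∨ Dif H H' v x
  · have c3 : 2 ≤ ((H.edgeSet ∆ H'.edgeSet) ∩ quad u v p x).ncard := by
      rcases hx with hx | hx
      · rw [← Set.ncard_pair (a := s(u, p)) (b := s(u, x)) (by rw [Ne, Sym2.eq_iff]; grind)]
        refine Set.ncard_le_ncard ?_
        rintro e (rfl | rfl)
        · exact mup
        · exact ⟨mem_symmDiff_edgeSet.2 hx, by simp [quad]⟩
      · rw [← Set.ncard_pair (a := s(u, p)) (b := s(v, x)) (by rw [Ne, Sym2.eq_iff]; grind)]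
        refine Set.ncard_le_ncard ?_
        rintro e (rfl | rfl)
        · exact mup
        · exact ⟨mem_symmDiff_edgeSet.2 hx, by simp [quad]⟩
    exact ⟨K, K', (hr.trans hr2).mono (by norm_num), by omega⟩
  · have c3 : 1 ≤ ((H.edgeSet ∆ H'.edgeSet) ∩ quad u v p x).ncard := by
      exact (Set.ncard_pos (Set.toFinite _)).2 ⟨_, mup⟩
    have nux : s(u, x) ∉ quad p s v y := by
      clear * - s1 s2 s3 s6 hsx hus; simp only [mem_quad, Sym2.eq_iff]; grind
    have nvx : s(v, x) ∉ quad p s v y := by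
      clear * - s1 s4 s5 s6 hsx hvs'; simp only [mem_quad, Sym2.eq_iff]; grind
    have qux : s(u, x) ∈ quad u v p x := by simp [quad]
    have qvx : s(v, x) ∈ quad u v p x := by simp [quad]
    have aux : (tog H u v p x).Adj u x ↔ ¬ H.Adj u x := by
      rw [tog_adj hS]; clear * - qux; tauto
    have avx : (tog H u v p x).Adj v x ↔ ¬ H.Adj v x := by
      rw [tog_adj hS]; clear * - qvx; tauto
    obtain ⟨pu, pu'⟩ := hpres _ _ nux
    obtain ⟨pv, pv'⟩ := hpres _ _ nvx
    obtain ⟨z, L, L', hr3, -, -, hD3, -⟩ :=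
      reduce_one (u := u) (v := v) (b := x) hK hK' huv
        (by rw [Dif, pu, pu', aux]; clear * - hx; unfold Dif at hx; tauto)
        (by rw [Dif, pv, pv', avx]; clear * - hx; unfold Dif at hx; tauto)
        (by rw [pu, pv, aux, avx]; clear * - s8; tauto)
    exact ⟨L, L', (hr.trans hr2).trans hr3, by omega⟩

/-! ### Locating a reducible configuration -/

lemma exists_opposite {H H' : SimpleGraph (Fin n)} {w z : Fin n} (hdeg : deg H w = deg H' w)
    (h : Dif H H' w z) : ∃ z', Dif H H' w z' ∧ ¬ (H.Adj w z ↔ H.Adj w z') := by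
  by_contra! hcon
  by_cases hz : H.Adj w z
  · have hss : H'.neighborSet w ⊆ H.neighborSet w := by
      intro a ha
      by_contra ha'
      have := hcon a (fun k => ha' (k.2 ha))
      exact ha' (this.1 hz)
    have := Set.eq_of_subset_of_ncard_le hss hdeg.le
    apply h
    rw [← mem_neighborSet, ← mem_neighborSet, this]
  · have hss : H.neighborSet w ⊆ H'.neighborSet w := by
      intro a ha
      by_contra ha'
      have := hcon a (fun k => ha' (k.1 ha))
      exact hz (this.2 ha)
    have := Set.eq_of_subset_of_ncard_le hss hdeg.ge
    apply h
    rw [← mem_neighborSet, ← mem_neighborSet, this]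

/-- Equal numbers of cut edges: a differing cut pair forces one of the opposite kind. -/
lemma exists_opposite_cut {H H' : SimpleGraph (Fin n)} (hcut : cutCount V1 H = cutCount V1 H')
    {a b : Fin n} (ha : a ∈ V1) (hb : b ∉ V1) (h : Dif H H' a b) :
    ∃ a' b', a' ∈ V1 ∧ b' ∉ V1 ∧ Dif H H' a' b' ∧ ¬ (H.Adj a b ↔ H.Adj a' b') := by
  by_contra! hcon
  rw [cutCount_eq, cutCount_eq] at hcut
  have hab : s(a, b) ∈ cutPairs V1 := ⟨a, b, rfl, ha, hb⟩
  by_cases hz : H.Adj a b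
  · have hss : H'.edgeSet ∩ cutPairs V1 ⊆ H.edgeSet ∩ cutPairs V1 := by
      rintro _ ⟨he, a', b', rfl, ha', hb'⟩
      refine ⟨?_, a', b', rfl, ha', hb'⟩
      by_contra hn
      exact hn ((hcon a' b' ha' hb' (fun k => hn (k.2 he))).1 hz)
    have := Set.eq_of_subset_of_ncard_le hss hcut.le
    have : s(a, b) ∈ H'.edgeSet ∩ cutPairs V1 := this ▸ ⟨hz, hab⟩
    exact h (iff_of_true hz this.1)
  · have hss : H.edgeSet ∩ cutPairs V1 ⊆ H'.edgeSet ∩ cutPairs V1 := by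
      rintro _ ⟨he, a', b', rfl, ha', hb'⟩
      refine ⟨?_, a', b', rfl, ha', hb'⟩
      by_contra hn
      exact hz ((hcon a' b' ha' hb' (fun k => hn (k.1 he))).2 he)
    have := Set.eq_of_subset_of_ncard_le hss hcut.ge
    apply h
    refine iff_of_false hz fun hz' => hz ?_
    have : s(a, b) ∈ H.edgeSet ∩ cutPairs V1 := this ▸ ⟨hz', hab⟩
    exact this.1

lemma reducible_of_ne {γ : ℕ} {d : Fin n → ℕ} {H H' : SimpleGraph (Fin n)}
    (hd : ∀ u v, (u ∈ V1 ↔ v ∈ V1) → d u = d v) (hH : memPAM V1 γ d H)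
    (hH' : memPAM V1 γ d H') (hne : H ≠ H') : Reducible3 V1 H H' := by
  have rH : ClassRegular V1 H := fun u v h => by rw [hH.1, hH.1, hd u v h]
  have rH' : ClassRegular V1 H' := fun u v h => by rw [hH'.1, hH'.1, hd u v h]
  have hdeg : ∀ w, deg H w = deg H' w := fun w => by rw [hH.1, hH'.1]
  have hcut : cutCount V1 H = cutCount V1 H' := by rw [hH.2, hH'.2]
  by_contra hcon
  -- at each vertex, differing pairs of opposite kinds lead to different classes
  have sep : ∀ {w y z : Fin n}, Dif H H' w y → Dif H H' w z → ¬ (H.Adj w y ↔ H.Adj w z) →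
      ¬ (y ∈ V1 ↔ z ∈ V1) := fun {w y z} hy hz ho hc =>
    hcon (reducible_of_opposite rH rH' hc hy.symm hz.symm
      (by rwa [H.adj_comm y, H.adj_comm z]))
  obtain ⟨w, z, hwz⟩ : ∃ w z, Dif H H' w z := by
    by_contra! h
    refine hne ?_
    ext w z
    exact not_not.1 (h w z)
  obtain ⟨a, b, ha, hb, hab⟩ : ∃ a b, a ∈ V1 ∧ b ∉ V1 ∧ Dif H H' a b := by
    obtain ⟨z', hz', ho⟩ := exists_opposite (hdeg w) hwz
    have := sep hwz hz' ho
    by_cases hw : w ∈ V1 <;> by_cases hz : z ∈ V1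
    · exact ⟨w, z', hw, by tauto, hz'⟩
    · exact ⟨w, z, hw, hz, hwz⟩
    · exact ⟨z, w, hz, hw, hwz.symm⟩
    · exact ⟨z', w, by tauto, hw, hz'.symm⟩
  obtain ⟨a', b', ha', hb', hab', ho⟩ := exists_opposite_cut hcut ha hb hab
  obtain ⟨c, hc, hoc⟩ := exists_opposite (hdeg a) hab
  obtain ⟨c', hc', hoc'⟩ := exists_opposite (hdeg a') hab'
  have hcV : c ∈ V1 := by have := sep hab hc hoc; tauto
  have hcV' : c' ∈ V1 := by have := sep hab' hc' hoc'; tauto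
  have haa : a ≠ a' := by
    rintro rfl
    exact sep hab hab' ho (iff_of_false hb hb')
  have hac : H.Adj a c ↔ ¬ H.Adj a' c' := by clear * - ho hoc hoc'; tauto
  have hnd : ¬ Dif H H' a a' := by
    intro hD
    have h1 : H.Adj a c ↔ H.Adj a a' :=
      not_not.1 fun k => sep hc hD k (iff_of_true hcV ha')
    have h2 : H.Adj a' c' ↔ H.Adj a' a :=
      not_not.1 fun k => sep hc' hD.symm k (iff_of_true hcV' ha)
    rw [h1, h2, H.adj_comm a' a] at hac
    exact iff_not_self hac
  have hnd' : ¬ Dif H H' a' a := fun h => hnd h.symm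
  -- whichever status `aa'` has, it is opposite to that of exactly one of `ac`, `a'c'`
  by_cases hcase : H.Adj a a' ↔ H.Adj a c
  · exact hcon (reduce_three (u := c') (v := a) (p := a') (s := c) rH rH'
      (iff_of_true hcV' ha) (iff_of_true ha' hcV) (iff_of_true ha' ha) hc'.symm hc hnd haa
      (by rw [H.adj_comm c' a', hac]; clear * -; tauto)
      (by rw [H.adj_comm c' a', hcase, hac]; clear * -; tauto))
  · exact hcon (reduce_three (u := c) (v := a') (p := a) (s := c') rH rH'
      (iff_of_true hcV ha') (iff_of_true ha hcV') (iff_of_true ha ha') hc.symm hc' hnd' haa.symm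
      (by rw [H.adj_comm c a, hac]; clear * -; tauto)
      (by rw [H.adj_comm c a, H.adj_comm a' a]; exact fun k => hcase k.symm))

lemma exists_path {γ : ℕ} {d : Fin n → ℕ} (hd : ∀ u v, (u ∈ V1 ↔ v ∈ V1) → d u = d v) (N : ℕ) :
    ∀ H H' : SimpleGraph (Fin n), memPAM V1 γ d H → memPAM V1 γ d H' →
      (H.edgeSet ∆ H'.edgeSet).ncard = N → ∃ t, 2 * t ≤ 3 * N ∧ MovePath V1 t H H' := by
  induction N using Nat.strong_induction_on with
  | _ N ih =>
    intro H H' hH hH' hN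
    by_cases hne : H = H'
    · subst hne
      exact ⟨0, by omega, .nil _⟩
    · obtain ⟨K, K', ⟨i, j, hij, p, q⟩, hD⟩ := reducible_of_ne hd hH hH' hne
      obtain ⟨t, ht, r⟩ := ih _ (by omega) K K' (p.mem_iff.1 hH) (q.mem_iff.2 hH') rfl
      exact ⟨i + (t + j), by omega, p.trans (r.trans q)⟩

/-- following Lemma 7 of Amanatidis–Green–Mihail. For a JDM
instance with two regular classes, any two graphs `H, H' ∈ 𝒢(γ,d)` are
connected, within `𝒢(γ,d)`, by a sequence of at most `(3/2)·|E(H) △ E(H')|`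
switches. -/
theorem stmt19 {n : ℕ} (V1 : Finset (Fin n)) (β1 β2 γ : ℕ) (d : Fin n → ℕ)
    (hV1 : V1.Nonempty) (hV2 : V1ᶜ.Nonempty)
    (hd : ∀ v, d v = if v ∈ V1 then β1 else β2)
    (hβ1lo : 1 ≤ β1) (hβ1hi : β1 ≤ n - 1)
    (hβ2lo : 1 ≤ β2) (hβ2hi : β2 ≤ n - 1)
    (hγlo : 1 ≤ γ) (hγhi : γ ≤ V1.card * V1ᶜ.card - 1)
    (H H' : SimpleGraph (Fin n)) (hH : memPAM V1 γ d H) (hH' : memPAM V1 γ d H') :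
    ∃ t : ℕ, 2 * t ≤ 3 * (H.edgeSet ∆ H'.edgeSet).ncard ∧
      ∃ f : ℕ → SimpleGraph (Fin n), f 0 = H ∧ f t = H' ∧
        (∀ i ≤ t, memPAM V1 γ d (f i)) ∧ (∀ i < t, switchMove (f i) (f (i+1))) := by
  have hcl : ∀ u v, (u ∈ V1 ↔ v ∈ V1) → d u = d v := fun u v h => by
    rw [hd, hd]
    simp only [h]
  obtain ⟨t, ht, p⟩ := exists_path hcl _ H H' hH hH' rfl
  obtain ⟨f, h0, h1, hf⟩ := p.exists_fun
  refine ⟨t, ht, f, h0, h1, fun i => ?_, fun i hi => (hf i hi).isSwitch⟩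
  induction i with
  | zero => exact fun _ => h0 ▸ hH
  | succ i ih => exact fun hi => (hf i (by omega)).mem_of_mem (ih (by omega))
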